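/- arXiv:1805.00578 — 2 statements merged into one kernel-verified Lean document; each statement's English description precedes it below -/
import Mathlib

section
/- For independent random variables X ~ Poi(x) and Y ~ Poi(1) with x > 0, E[|X − Y|] = 2e^{−x−1}(I₀(2√x) + √x·I₁(2√x)) + (1 − x)(1 − 2Q₁(√(2x), √2)), where I_k denotes the modified Bessel function of order k and Q₁ is the Marcum Q function Q₁(a,b) = e^{−(a²+b²)/2} Σ_{k=0}^∞ (a/b)^k I_k(ab). -/
open MeasureTheory ProbabilityTheory

/-- Modified Bessel function of the first kind of nonnegative integer order. -/
noncomputable def besselI (k : ℕ) (y : ℝ) : ℝ :=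
  ∑' i : ℕ, (y / 2) ^ (2 * i + k) / (Nat.factorial i * Nat.factorial (i + k))

/-- Marcum Q function `Q₁(a,b) = e^{−(a²+b²)/2} Σ_{k=0}^∞ (a/b)^k I_k(ab)`. -/
noncomputable def marcumQ1 (a b : ℝ) : ℝ :=
  Real.exp (-(a ^ 2 + b ^ 2) / 2) * ∑' k : ℕ, (a / b) ^ k * besselI k (a * b)

lemma aux_congr {ι : Type} {f g : ι → ℝ} {a b : ℝ} (h : HasSum f a) (hf : ∀ i, g i = f i)
    (hab : b = a) : HasSum g b := by
  have : g = f := funext hf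
  rw [this, hab]; exact h

lemma aux_aemeas {Ω : Type*} [MeasurableSpace Ω] (μ : Measure Ω) [IsProbabilityMeasure μ]
    (X : Ω → ℕ) (h : ∑' j : ℕ, μ {ω | X ω = j} ≤ 1) : AEMeasurable X μ := by
  classical
  have hnull : ∀ j : ℕ, NullMeasurableSet {ω | X ω = j} μ := by
    intro j
    set s := {ω | X ω = j} with hs
    have h1 : μ s + μ sᶜ ≤ 1 := by
      refine le_trans ?_ h
      rw [ENNReal.tsum_eq_add_tsum_ite j]
      gcongr
      have hsub : sᶜ ⊆ ⋃ i : ℕ, (if i = j then ∅ else {ω | X ω = i}) := by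
        intro ω hω
        refine Set.mem_iUnion.2 ⟨X ω, ?_⟩
        have : X ω ≠ j := hω
        simp [this]
      refine (measure_mono hsub).trans ((measure_iUnion_le _).trans (le_of_eq ?_))
      congr 1
      ext i
      split_ifs <;> simp
    set D := toMeasurable μ sᶜ with hD
    have hDm : MeasurableSet D := measurableSet_toMeasurable _ _
    have hsub : Dᶜ ⊆ s := by
      rw [Set.compl_subset_comm]
      exact subset_toMeasurable _ _
    have h2 : μ s ≤ μ Dᶜ := by
      rw [prob_compl_eq_one_sub hDm, hD, measure_toMeasurable]
      exact ENNReal.le_sub_of_add_le_right (measure_ne_top _ _) h1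
    have h3 := ae_eq_of_subset_of_measure_ge hsub h2 hDm.compl.nullMeasurableSet
      (measure_ne_top _ _)
    exact hDm.compl.nullMeasurableSet.congr h3
  apply NullMeasurable.aemeasurable
  intro t _
  have : X ⁻¹' t = ⋃ j ∈ t, {ω | X ω = j} := by
    ext ω; simp
  rw [this]
  exact NullMeasurableSet.biUnion t.to_countable fun j _ => hnull j

noncomputable def auxW (x : ℝ) (p : ℕ × ℕ) : ℝ :=
  (x ^ p.1 / Nat.factorial p.1) * (1 / Nat.factorial p.2)

lemma aux_hasSum_exp (x : ℝ) : HasSum (fun i : ℕ => x ^ i / (Nat.factorial i : ℝ)) (Real.exp x) := by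
  rw [Real.exp_eq_exp_ℝ]
  exact NormedSpace.expSeries_div_hasSum_exp x

lemma auxW_nonneg (x : ℝ) (hx : 0 < x) (p : ℕ × ℕ) : 0 ≤ auxW x p := by
  unfold auxW; positivity

lemma auxW_hasSum (x : ℝ) (hx : 0 < x) : HasSum (auxW x) (Real.exp (x + 1)) := by
  have h1 := aux_hasSum_exp x
  have h2 : HasSum (fun i : ℕ => 1 / (Nat.factorial i : ℝ)) (Real.exp 1) := by
    simpa using aux_hasSum_exp 1
  rw [Real.exp_add]
  exact h1.mul h2 (h1.summable.mul_of_nonneg h2.summable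
    (fun i => by positivity) (fun i => by positivity))

lemma auxW_fst (x : ℝ) (i j : ℕ) : ((i + 1 : ℕ) : ℝ) * auxW x (i + 1, j) = x * auxW x (i, j) := by
  unfold auxW
  simp only [Nat.factorial_succ]
  push_cast
  field_simp
  ring

lemma auxW_snd (x : ℝ) (i j : ℕ) : ((j + 1 : ℕ) : ℝ) * auxW x (i, j + 1) = auxW x (i, j) := by
  unfold auxW
  simp only [Nat.factorial_succ]
  push_cast
  field_simp

lemma aux_shift_fst (x : ℝ) (c : ℕ × ℕ → ℝ) (a : ℝ)
    (h : HasSum (fun p : ℕ × ℕ => auxW x p * c (p.1 + 1, p.2)) a) :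
    HasSum (fun p : ℕ × ℕ => (p.1 : ℝ) * auxW x p * c p) (x * a) := by
  have hinj : Function.Injective (fun p : ℕ × ℕ => (p.1 + 1, p.2)) := by
    rintro ⟨a, b⟩ ⟨c, d⟩ h
    simpa using h
  rw [← hinj.hasSum_iff]
  · refine aux_congr (h.mul_left x) ?_ rfl
    rintro ⟨i, j⟩
    simp only [Function.comp]
    rw [auxW_fst]; ring
  · rintro ⟨i, j⟩ hp
    cases i with
    | zero => simp
    | succ i => exact absurd ⟨(i, j), rfl⟩ hp

lemma aux_shift_snd (x : ℝ) (c : ℕ × ℕ → ℝ) (a : ℝ)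
    (h : HasSum (fun p : ℕ × ℕ => auxW x p * c (p.1, p.2 + 1)) a) :
    HasSum (fun p : ℕ × ℕ => (p.2 : ℝ) * auxW x p * c p) a := by
  have hinj : Function.Injective (fun p : ℕ × ℕ => (p.1, p.2 + 1)) := by
    rintro ⟨a, b⟩ ⟨c, d⟩ h
    simpa using h
  rw [← hinj.hasSum_iff]
  · convert h using 1
    funext ⟨i, j⟩
    simp only [Function.comp]
    rw [auxW_snd]
  · rintro ⟨i, j⟩ hp
    cases j with
    | zero => simp
    | succ j => exact absurd ⟨(i, j), rfl⟩ hp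

lemma aux_summable (x : ℝ) (hx : 0 < x) (P : ℕ × ℕ → Prop) [DecidablePred P] :
    Summable (fun p => auxW x p * (if P p then 1 else 0)) := by
  refine Summable.of_nonneg_of_le (fun p => ?_) (fun p => ?_) (auxW_hasSum x hx).summable
  · have := auxW_nonneg x hx p
    split_ifs <;> simp [this]
  · have := auxW_nonneg x hx p
    split_ifs <;> simp [this]

lemma aux_Q (x : ℝ) (hx : 0 < x) :
    HasSum (fun p : ℕ × ℕ => auxW x p * (if p.2 ≤ p.1 then 1 else 0))
      (Real.exp (x + 1) * marcumQ1 (Real.sqrt (2 * x)) (Real.sqrt 2)) := by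
  have hs := aux_summable x hx (fun p => p.2 ≤ p.1)
  have hinj : Function.Injective (fun p : ℕ × ℕ => (p.2 + p.1, p.2)) := by
    rintro ⟨a, b⟩ ⟨c, d⟩ h
    simp only [Prod.mk.injEq] at h ⊢
    omega
  have hsupp : ∀ p ∉ Set.range (fun p : ℕ × ℕ => (p.2 + p.1, p.2)),
      auxW x p * (if p.2 ≤ p.1 then 1 else 0) = 0 := by
    rintro ⟨i, j⟩ hp
    by_cases hij : j ≤ i
    · exact absurd ⟨(i - j, j), by simp; omega⟩ hp
    · simp [hij]
  have hsx : Real.sqrt x ^ 2 = x := Real.sq_sqrt hx.le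
  have hsx0 : 0 < Real.sqrt x := Real.sqrt_pos.2 hx
  have h2 : Real.sqrt 2 ^ 2 = 2 := Real.sq_sqrt (by norm_num)
  have h20 : 0 < Real.sqrt 2 := by positivity
  have hval : Real.exp (x + 1) * marcumQ1 (Real.sqrt (2 * x)) (Real.sqrt 2)
      = ∑' p : ℕ × ℕ, auxW x (p.2 + p.1, p.2) := by
    have hs' : Summable fun p : ℕ × ℕ => auxW x (p.2 + p.1, p.2) :=
      (auxW_hasSum x hx).summable.comp_injective hinj
    rw [hs'.tsum_prod]
    unfold marcumQ1
    rw [← mul_assoc, ← Real.exp_add, Real.sq_sqrt (by positivity), h2]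
    rw [show x + 1 + -(2 * x + 2) / 2 = 0 by ring, Real.exp_zero, one_mul]
    congr 1
    ext k
    unfold besselI
    rw [← tsum_mul_left]
    congr 1
    ext i
    rw [Real.sqrt_mul (by norm_num)]
    rw [show Real.sqrt 2 * Real.sqrt x / Real.sqrt 2 = Real.sqrt x by field_simp]
    rw [show Real.sqrt 2 * Real.sqrt x * Real.sqrt 2 / 2 = Real.sqrt x by
      linear_combination (Real.sqrt x / 2) * h2]
    unfold auxW
    simp only
    have : x ^ (i + k) = Real.sqrt x ^ k * Real.sqrt x ^ (2 * i + k) := by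
      conv_lhs => rw [← hsx]
      rw [← pow_mul, ← pow_add]; congr 1; ring
    rw [this]
    field_simp
  rw [hval]
  rw [← hinj.hasSum_iff hsupp]
  have hs' : Summable fun p : ℕ × ℕ => auxW x (p.2 + p.1, p.2) :=
    (auxW_hasSum x hx).summable.comp_injective hinj
  convert hs'.hasSum using 1
  ext p
  simp

lemma aux_Z (x : ℝ) (hx : 0 < x) :
    HasSum (fun p : ℕ × ℕ => auxW x p * (if p.1 = p.2 then 1 else 0))
      (besselI 0 (2 * Real.sqrt x)) := by
  have hinj : Function.Injective (fun i : ℕ => (i, i)) := by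
    intro a b h; simpa using h
  have hs' : Summable fun i : ℕ => auxW x (i, i) :=
    (auxW_hasSum x hx).summable.comp_injective hinj
  have hsx : Real.sqrt x ^ 2 = x := Real.sq_sqrt hx.le
  rw [← hinj.hasSum_iff]
  · convert hs'.hasSum using 1
    · ext p; simp
    · unfold besselI auxW
      congr 1
      ext i
      simp only [mul_div_cancel_left₀ _ (two_ne_zero (α := ℝ)), add_zero, pow_mul, hsx]
      field_simp
  · rintro ⟨i, j⟩ hp
    by_cases hij : i = j
    · exact absurd ⟨i, by simp [hij]⟩ hp
    · simp [hij]

lemma aux_V (x : ℝ) (hx : 0 < x) :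
    ∃ V, HasSum (fun p : ℕ × ℕ => auxW x p * (if p.2 = p.1 + 1 then 1 else 0)) V ∧
      x * V = Real.sqrt x * besselI 1 (2 * Real.sqrt x) := by
  have hinj : Function.Injective (fun i : ℕ => (i, i + 1)) := by
    intro a b h; simpa using h
  have hs' : Summable fun i : ℕ => auxW x (i, i + 1) :=
    (auxW_hasSum x hx).summable.comp_injective hinj
  have hsx : Real.sqrt x ^ 2 = x := Real.sq_sqrt hx.le
  refine ⟨∑' i : ℕ, auxW x (i, i + 1), (hinj.hasSum_iff ?_).1 ?_, ?_⟩
  · rintro ⟨i, j⟩ hp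
    by_cases hij : j = i + 1
    · exact absurd ⟨i, by simp [hij]⟩ hp
    · simp [hij]
  · convert hs'.hasSum using 1
    ext p; simp
  · unfold besselI auxW
    rw [← tsum_mul_left, ← tsum_mul_left]
    congr 1
    ext i
    simp only [mul_div_cancel_left₀ _ (two_ne_zero (α := ℝ)), pow_succ, pow_mul]
    have h3 : Real.sqrt x * Real.sqrt x = x := Real.mul_self_sqrt hx.le
    simp only [pow_zero, one_mul, h3]
    field_simp
    rw [hsx]

lemma aux_main (x : ℝ) (hx : 0 < x) :
    HasSum (fun p : ℕ × ℕ => auxW x p * |(p.1 : ℝ) - p.2|)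
      (2 * (besselI 0 (2 * Real.sqrt x) + Real.sqrt x * besselI 1 (2 * Real.sqrt x))
        + Real.exp (x + 1) * ((1 - x) *
          (1 - 2 * marcumQ1 (Real.sqrt (2 * x)) (Real.sqrt 2)))) := by
  have hQ := aux_Q x hx
  have hZ := aux_Z x hx
  obtain ⟨V, hV, hVe⟩ := aux_V x hx
  have hS := auxW_hasSum x hx
  have h1 := aux_shift_fst x (fun p => if p.2 ≤ p.1 then 1 else 0) _ (by
    refine aux_congr (hQ.add hV) ?_ rfl
    rintro ⟨i, j⟩
    simp only
    rw [← mul_add]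
    congr 1
    split_ifs <;> first | omega | norm_num)
  have h2 := aux_shift_snd x (fun p => if p.2 ≤ p.1 then 1 else 0) _ (by
    refine aux_congr (hQ.sub hZ) ?_ rfl
    rintro ⟨i, j⟩
    simp only
    rw [← mul_sub]
    congr 1
    split_ifs <;> first | omega | norm_num)
  have h3 := aux_shift_fst x (fun _ => 1) _ (by simpa using hS)
  have h4 := aux_shift_snd x (fun _ => 1) _ (by simpa using hS)
  refine aux_congr (((h1.sub h2).mul_left 2).sub (h3.sub h4)) ?_ ?_
  · rintro ⟨i, j⟩
    simp only
    split_ifs with hij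
    · rw [abs_of_nonneg (by simpa using hij)]; ring
    · rw [abs_of_nonpos (by simpa using (not_le.1 hij).le)]; ring
  · linear_combination -2 * hVe

theorem stmt_18 {Ω : Type*} [MeasurableSpace Ω] (μ : Measure Ω) [IsProbabilityMeasure μ]
    (x : ℝ) (hx : 0 < x) (X Y : Ω → ℕ)
    (hX : ∀ j : ℕ, μ {ω | X ω = j}
      = ENNReal.ofReal (Real.exp (-x) * x ^ j / Nat.factorial j))
    (hY : ∀ j : ℕ, μ {ω | Y ω = j}
      = ENNReal.ofReal (Real.exp (-1) / Nat.factorial j))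
    (hindep : IndepFun X Y μ) :
    ∫ ω, |(X ω : ℝ) - (Y ω : ℝ)| ∂μ
      = 2 * Real.exp (-x - 1) * (besselI 0 (2 * Real.sqrt x)
          + Real.sqrt x * besselI 1 (2 * Real.sqrt x))
        + (1 - x) * (1 - 2 * marcumQ1 (Real.sqrt (2 * x)) (Real.sqrt 2)) := by
  have key : ∀ y : ℝ, 0 < y → ∑' j : ℕ, ENNReal.ofReal (Real.exp (-y) * y ^ j / Nat.factorial j) ≤ 1 := by
    intro y hy
    have h := (aux_hasSum_exp y).mul_left (Real.exp (-y))
    rw [← Real.exp_add, neg_add_cancel, Real.exp_zero] at h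
    simp only [← mul_div_assoc] at h
    rw [← ENNReal.ofReal_tsum_of_nonneg (fun n => by positivity) h.summable, h.tsum_eq]
    simp
  have mX : AEMeasurable X μ := aux_aemeas μ X (by simp only [hX]; exact key x hx)
  have mY : AEMeasurable Y μ := aux_aemeas μ Y (by
    simp only [hY]; simpa using key 1 one_pos)
  have hmap := (indepFun_iff_map_prod_eq_prod_map_map mX mY).1 hindep
  have hint : ∫ ω, |(X ω : ℝ) - (Y ω : ℝ)| ∂μ
      = ∫ p : ℕ × ℕ, |(p.1 : ℝ) - (p.2 : ℝ)| ∂(μ.map (fun ω => (X ω, Y ω))) := by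
    rw [integral_map (mX.prodMk mY)]
    exact (measurable_of_countable _).aestronglyMeasurable
  have hpt : ∀ p : ℕ × ℕ, μ.map (fun ω => (X ω, Y ω)) {p}
      = ENNReal.ofReal (Real.exp (-x - 1) * auxW x p) := by
    rintro ⟨i, j⟩
    rw [hmap, ← Set.singleton_prod_singleton, Measure.prod_prod,
      Measure.map_apply_of_aemeasurable mX (measurableSet_singleton i),
      Measure.map_apply_of_aemeasurable mY (measurableSet_singleton j)]
    have e1 : X ⁻¹' {i} = {ω | X ω = i} := rfl
    have e2 : Y ⁻¹' {j} = {ω | Y ω = j} := rfl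
    rw [e1, e2, hX, hY, ← ENNReal.ofReal_mul (by positivity)]
    congr 1
    unfold auxW
    rw [sub_eq_add_neg, Real.exp_add]
    simp only
    ring
  rw [hint, ← Measure.sum_smul_dirac (μ.map (fun ω => (X ω, Y ω)))]
  simp only [hpt]
  rw [integral_sum_dirac (fun _ => ENNReal.ofReal_ne_top)]
  have hm := (aux_main x hx).mul_left (Real.exp (-x - 1))
  have he : Real.exp (-x - 1) * Real.exp (x + 1) = 1 := by
    rw [← Real.exp_add]; simp
  have := hm.tsum_eq
  rw [show ∑' p : ℕ × ℕ, (ENNReal.ofReal (Real.exp (-x - 1) * auxW x p)).toReal •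
      |(p.1 : ℝ) - (p.2 : ℝ)| = ∑' p : ℕ × ℕ, Real.exp (-x - 1) *
      (auxW x p * |(p.1 : ℝ) - (p.2 : ℝ)|) from ?_, this]
  · linear_combination ((1 - x) *
      (1 - 2 * marcumQ1 (Real.sqrt (2 * x)) (Real.sqrt 2))) * he
  · congr 1
    ext p
    rw [ENNReal.toReal_ofReal (mul_nonneg (Real.exp_pos _).le (auxW_nonneg x hx p)), smul_eq_mul,
      mul_assoc]
end

section
/- Define h(x) = E[min(Poi(x), Poi(1))] for independent Poisson variables. Then h(x) = (1 + x − E[|Poi(x) − Poi(1)|])/2, and consequently h(x) = (1 + x − 2e^{−x−1}(I₀(2√x) + √x·I₁(2√x)) − (1−x)(1 − 2Q₁(√(2x), √2)))/2 for x > 0. -/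
open MeasureTheory ProbabilityTheory

lemma hs_congr {f g : ℕ × ℕ → ℝ} {a : ℝ} (h : ∀ p, f p = g p) : HasSum f a ↔ HasSum g a := by
  rw [funext h]

lemma aem_aux {Ω : Type*} [MeasurableSpace Ω] (μ : Measure Ω) [IsProbabilityMeasure μ]
    (X : Ω → ℕ) (h : ∑' j, μ {ω | X ω = j} = 1) : AEMeasurable X μ := by
  have key : ∀ j, NullMeasurableSet {ω | X ω = j} μ := by
    intro j
    set A := {ω | X ω = j} with hA
    have h1 : μ A + μ Aᶜ ≤ 1 := by
      rw [← h, ENNReal.tsum_eq_add_tsum_ite j]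
      gcongr
      have : Aᶜ ⊆ ⋃ i, (if i = j then ∅ else {ω | X ω = i}) := by
        intro ω hω
        refine Set.mem_iUnion.2 ⟨X ω, ?_⟩
        have : X ω ≠ j := hω
        simp [this]
      refine (measure_mono this).trans ((measure_iUnion_le _).trans (le_of_eq ?_))
      congr 1
      ext i
      split_ifs <;> simp
    have h2 := measure_union_add_inter (μ := μ) (toMeasurable μ A) (measurableSet_toMeasurable μ Aᶜ)
    have h3 : toMeasurable μ A ∪ toMeasurable μ Aᶜ = Set.univ := by
      apply Set.eq_univ_of_univ_subset
      rw [← Set.union_compl_self A]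
      exact Set.union_subset_union (subset_toMeasurable _ _) (subset_toMeasurable _ _)
    rw [h3, measure_univ, measure_toMeasurable, measure_toMeasurable] at h2
    have h4 : μ (toMeasurable μ A ∩ toMeasurable μ Aᶜ) = 0 := by
      rw [← h2] at h1
      have := (ENNReal.add_le_add_iff_left (a := 1) (by simp) (c := 0)).1 (by simpa using h1)
      simpa using this
    refine (measurableSet_toMeasurable μ A).nullMeasurableSet.congr ?_
    refine Filter.EventuallyLE.antisymm ?_ (Filter.Eventually.of_forall (subset_toMeasurable μ A))
    rw [ae_le_set]
    refine measure_mono_null ?_ h4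
    intro ω hω
    exact ⟨hω.1, subset_toMeasurable _ _ hω.2⟩
  apply NullMeasurable.aemeasurable
  intro s _
  have : X ⁻¹' s = ⋃ j ∈ s, {ω | X ω = j} := by ext; simp
  rw [this]
  exact NullMeasurableSet.biUnion s.to_countable (fun j _ => key j)

lemma law_aux {Ω : Type*} [MeasurableSpace Ω] (μ : Measure Ω) [IsProbabilityMeasure μ]
    (r : NNReal) (X : Ω → ℕ) (hX : ∀ j : ℕ, μ {ω | X ω = j}
      = ENNReal.ofReal (Real.exp (-r) * (r:ℝ) ^ j / Nat.factorial j)) :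
    AEMeasurable X μ ∧ μ.map X = poissonMeasure r := by
  have hs : AEMeasurable X μ := by
    apply aem_aux
    simp_rw [hX]
    rw [← ENNReal.ofReal_tsum_of_nonneg (fun _ => by positivity)
      (hasSum_one_poissonMeasure r).summable, (hasSum_one_poissonMeasure r).tsum_eq]
    simp
  refine ⟨hs, Measure.ext_of_singleton fun j => ?_⟩
  rw [Measure.map_apply_of_aemeasurable hs (by measurability), poissonMeasure_singleton, ← hX]
  rfl

lemma mean_aux (r : NNReal) :
    HasSum (fun n : ℕ => Real.exp (-r) * (r:ℝ) ^ n / Nat.factorial n * n) r := by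
  rw [← hasSum_nat_add_iff' 1]
  have h := (hasSum_one_poissonMeasure r).mul_left (r:ℝ)
  have e : (fun n : ℕ => Real.exp (-r) * (r:ℝ) ^ (n + 1) / Nat.factorial (n + 1) * ((n + 1 : ℕ) : ℝ))
      = fun n : ℕ => (r:ℝ) * (Real.exp (-r) * (r:ℝ) ^ n / Nat.factorial n) := by
    funext n
    rw [Nat.factorial_succ]
    push_cast
    field_simp
    ring
  rw [e]
  simpa using h

lemma integ_aux {Ω : Type*} [MeasurableSpace Ω] (μ : Measure Ω) [IsProbabilityMeasure μ]
    (r : NNReal) (X : Ω → ℕ) (hX : AEMeasurable X μ) (hl : μ.map X = poissonMeasure r) :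
    Integrable (fun ω => (X ω : ℝ)) μ ∧ ∫ ω, (X ω : ℝ) ∂μ = r := by
  constructor
  · have : Integrable (fun n : ℕ => (n : ℝ)) (μ.map X) := by
      rw [hl, integrable_poissonMeasure_iff]
      simpa using (mean_aux r).summable
    exact this.comp_aemeasurable hX
  · rw [← integral_map (f := fun n : ℕ => (n : ℝ)) hX (by fun_prop), hl, integral_poissonMeasure]
    simpa using (mean_aux r).tsum_eq

noncomputable def ww (x : ℝ) (p : ℕ × ℕ) : ℝ := x ^ p.1 / p.1.factorial * (1 ^ p.2 / p.2.factorial)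

lemma ww_hasSum (x : ℝ) (hx : 0 < x) : HasSum (ww x) (Real.exp (x + 1)) := by
  have h1 := NormedSpace.expSeries_div_hasSum_exp (x : ℝ)
  have h2 := NormedSpace.expSeries_div_hasSum_exp (1 : ℝ)
  rw [← Real.exp_eq_exp_ℝ] at h1 h2
  have h3 : Summable (fun p : ℕ × ℕ => x ^ p.1 / (p.1.factorial : ℝ) * ((1:ℝ) ^ p.2 / p.2.factorial)) := by
    apply h1.summable.mul_of_nonneg h2.summable
    · intro n; simp only [Pi.zero_apply]; positivity
    · intro n; simp only [Pi.zero_apply]; positivity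
  have h4 := h1.mul h2 h3
  rw [← Real.exp_add] at h4
  exact h4

lemma ww_summable_ite (x : ℝ) (hx : 0 < x) (P : ℕ × ℕ → Prop) [DecidablePred P] :
    Summable (fun p => if P p then ww x p else 0) := by
  refine Summable.of_nonneg_of_le (fun p => ?_) (fun p => ?_) (ww_hasSum x hx).summable
  all_goals have : 0 ≤ ww x p := by unfold ww; positivity
  all_goals split_ifs <;> simp [this]

lemma bess_aux (x : ℝ) (hx : 0 < x) (k : ℕ) :
    Real.sqrt x ^ k * besselI k (2 * Real.sqrt x) = ∑' j : ℕ, ww x (j + k, j) := by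
  unfold besselI ww
  rw [← tsum_mul_left]
  congr 1
  ext j
  have : Real.sqrt x ^ k * Real.sqrt x ^ (2 * j + k) = x ^ (j + k) := by
    rw [← pow_add, show k + (2 * j + k) = 2 * (j + k) by ring, pow_mul, Real.sq_sqrt hx.le]
  rw [mul_div_cancel_left₀ _ (two_ne_zero), ← mul_div_assoc, this]
  simp only [one_pow]
  field_simp

lemma A_aux (x : ℝ) (hx : 0 < x) :
    ∑' p : ℕ × ℕ, (if p.2 ≤ p.1 then ww x p else 0)
      = Real.exp (x + 1) * marcumQ1 (Real.sqrt (2 * x)) (Real.sqrt 2) := by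
  unfold marcumQ1
  have e1 : Real.sqrt (2 * x) / Real.sqrt 2 = Real.sqrt x := by
    rw [Real.sqrt_mul (by norm_num)]; field_simp
  have e2 : Real.sqrt (2 * x) * Real.sqrt 2 = 2 * Real.sqrt x := by
    rw [Real.sqrt_mul (by norm_num), mul_right_comm, Real.mul_self_sqrt (by norm_num)]
  rw [e1, e2, ← mul_assoc, ← Real.exp_add, Real.sq_sqrt (by positivity), Real.sq_sqrt (by norm_num),
    show x + 1 + -(2 * x + 2) / 2 = 0 by ring, Real.exp_zero, one_mul]
  simp_rw [bess_aux x hx]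
  have inj : Function.Injective (fun q : ℕ × ℕ => (q.2 + q.1, q.2)) := by
    rintro ⟨a, b⟩ ⟨c, d⟩ h
    simp only [Prod.mk.injEq] at h ⊢
    omega
  have h := (inj.hasSum_iff (f := fun p : ℕ × ℕ => (if p.2 ≤ p.1 then ww x p else 0))
    (a := ∑' p : ℕ × ℕ, (if p.2 ≤ p.1 then ww x p else 0)) (by
      rintro ⟨i, j⟩ hp
      rw [if_neg]
      intro hle
      exact hp ⟨(i - j, j), by simp only [Prod.mk.injEq, and_true]; simp at hle; omega⟩)).2
      (ww_summable_ite x hx _).hasSum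
  have h' : HasSum (fun q : ℕ × ℕ => ww x (q.2 + q.1, q.2))
      (∑' p : ℕ × ℕ, (if p.2 ≤ p.1 then ww x p else 0)) := by
    refine (hs_congr (fun q => ?_)).mpr h
    simp
  rw [← h'.tsum_eq]
  exact h'.summable.tsum_prod

lemma diag_aux (x : ℝ) (hx : 0 < x) :
    HasSum (fun p : ℕ × ℕ => if p.1 = p.2 then ww x p else 0) (besselI 0 (2 * Real.sqrt x)) := by
  have inj : Function.Injective (fun q : ℕ => (q, q)) := by
    intro a b h
    simpa using h
  have h := (inj.hasSum_iff (f := fun p : ℕ × ℕ => (if p.1 = p.2 then ww x p else 0))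
    (a := ∑' p : ℕ × ℕ, (if p.1 = p.2 then ww x p else 0)) (by
      rintro ⟨i, j⟩ hp
      rw [if_neg]
      intro hle
      exact hp ⟨i, by simpa using hle⟩))
  have h2 := h.2 (ww_summable_ite x hx _).hasSum
  have hb := bess_aux x hx 0
  simp only [pow_zero, one_mul, add_zero] at hb
  have : besselI 0 (2 * Real.sqrt x) = ∑' p : ℕ × ℕ, (if p.1 = p.2 then ww x p else 0) := by
    rw [hb, ← h2.tsum_eq]; congr 1; ext q; simp
  rw [this]
  exact (ww_summable_ite x hx _).hasSum

lemma off_aux (x : ℝ) (hx : 0 < x) :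
    HasSum (fun p : ℕ × ℕ => x * if p.2 = p.1 + 1 then ww x p else 0)
      (Real.sqrt x * besselI 1 (2 * Real.sqrt x)) := by
  have inj : Function.Injective (fun q : ℕ => (q, q + 1)) := by
    intro a b h
    simpa using h
  have h := (inj.hasSum_iff (f := fun p : ℕ × ℕ => (if p.2 = p.1 + 1 then ww x p else 0))
    (a := ∑' p : ℕ × ℕ, (if p.2 = p.1 + 1 then ww x p else 0)) (by
      rintro ⟨i, j⟩ hp
      rw [if_neg]
      intro hle
      exact hp ⟨i, by simpa using hle.symm⟩))
  have h2 := h.2 (ww_summable_ite x hx _).hasSum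
  have hb := bess_aux x hx 1
  simp only [pow_one] at hb
  have : Real.sqrt x * besselI 1 (2 * Real.sqrt x)
      = x * ∑' p : ℕ × ℕ, (if p.2 = p.1 + 1 then ww x p else 0) := by
    rw [hb, ← h2.tsum_eq, ← tsum_mul_left]; congr 1; ext q
    simp [ww, pow_succ]
    ring
  rw [this]
  exact (ww_summable_ite x hx _).hasSum.mul_left x

lemma min_aux (x : ℝ) (hx : 0 < x) :
    HasSum (fun p : ℕ × ℕ => ww x p * min (p.1 : ℝ) (p.2 : ℝ))
      (x * Real.exp (x + 1) - (besselI 0 (2 * Real.sqrt x)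
        + Real.sqrt x * besselI 1 (2 * Real.sqrt x))
        + (1 - x) * (Real.exp (x + 1) * marcumQ1 (Real.sqrt (2 * x)) (Real.sqrt 2))) := by
  have hA := (ww_summable_ite x hx (fun p => p.2 ≤ p.1)).hasSum
  rw [A_aux x hx] at hA
  have hT := ww_hasSum x hx
  have hD := diag_aux x hx
  have hB := off_aux x hx
  have inj1 : Function.Injective (fun q : ℕ × ℕ => (q.1 + 1, q.2)) := by
    rintro ⟨a, b⟩ ⟨c, d⟩ h
    simpa using h
  have inj2 : Function.Injective (fun q : ℕ × ℕ => (q.1, q.2 + 1)) := by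
    rintro ⟨a, b⟩ ⟨c, d⟩ h
    simpa using h
  have s1 := (inj1.hasSum_iff (f := fun p : ℕ × ℕ => (if p.1 < p.2 then ww x p * p.1 else 0))
    (a := x * Real.exp (x + 1) - x * (Real.exp (x + 1) * marcumQ1 (Real.sqrt (2 * x)) (Real.sqrt 2))
       - Real.sqrt x * besselI 1 (2 * Real.sqrt x)) (by
      rintro ⟨i, j⟩ hp
      rcases i with _ | i
      · simp
      · exact absurd ⟨(i, j), rfl⟩ hp)).1 (by
    refine (hs_congr ?_).mpr (((hT.mul_left x).sub (hA.mul_left x)).sub hB)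
    rintro ⟨i, j⟩
    have e : ww x (i + 1, j) * ((i + 1 : ℕ) : ℝ) = x * ww x (i, j) := by
      simp only [ww, Nat.factorial_succ]
      push_cast
      field_simp
      ring
    simp only [Function.comp]
    rw [e]
    by_cases h1 : i + 1 < j
    · rw [if_pos h1, if_neg (by omega), if_neg (by omega)]; ring
    · rw [if_neg h1]
      by_cases h2 : j = i + 1
      · rw [if_neg (by omega), if_pos h2]; ring
      · rw [if_pos (by omega), if_neg h2]; ring)
  have s2 := (inj2.hasSum_iff (f := fun p : ℕ × ℕ => (if p.2 ≤ p.1 then ww x p * p.2 else 0))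
    (a := (Real.exp (x + 1) * marcumQ1 (Real.sqrt (2 * x)) (Real.sqrt 2))
       - besselI 0 (2 * Real.sqrt x)) (by
      rintro ⟨i, j⟩ hp
      rcases j with _ | j
      · simp
      · exact absurd ⟨(i, j), rfl⟩ hp)).1 (by
    refine (hs_congr ?_).mpr (hA.sub hD)
    rintro ⟨i, j⟩
    have e : ww x (i, j + 1) * ((j + 1 : ℕ) : ℝ) = ww x (i, j) := by
      simp only [ww, Nat.factorial_succ]
      push_cast
      field_simp
      simp
    simp only [Function.comp]
    rw [e]
    by_cases h1 : j + 1 ≤ i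
    · rw [if_pos h1, if_pos (by omega), if_neg (by omega)]; ring
    · rw [if_neg h1]
      by_cases h2 : i = j
      · rw [if_pos (by omega), if_pos h2]; ring
      · rw [if_neg (by omega), if_neg h2]; ring)
  convert s1.add s2 using 1
  · ext ⟨i, j⟩
    by_cases h : i < j
    · have : (i : ℝ) ≤ j := by exact_mod_cast h.le
      simp [h, this]
    · have : (j : ℝ) ≤ i := by exact_mod_cast (not_lt.1 h)
      simp [h, not_lt.1 h, this]
  · ring

/-- `h(x) = E[min(Poi(x), Poi(1))]` satisfies `h(x) = (1 + x − E|Poi(x) − Poi(1)|)/2`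
and has a closed form in terms of Bessel and Marcum Q functions. -/
theorem stmt_19 {Ω : Type*} [MeasurableSpace Ω] (μ : Measure Ω) [IsProbabilityMeasure μ]
    (x : ℝ) (hx : 0 < x) (X Y : Ω → ℕ)
    (hX : ∀ j : ℕ, μ {ω | X ω = j}
      = ENNReal.ofReal (Real.exp (-x) * x ^ j / Nat.factorial j))
    (hY : ∀ j : ℕ, μ {ω | Y ω = j}
      = ENNReal.ofReal (Real.exp (-1) / Nat.factorial j))
    (hindep : IndepFun X Y μ) :
    (∫ ω, min (X ω : ℝ) (Y ω : ℝ) ∂μ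
        = (1 + x - ∫ ω, |(X ω : ℝ) - (Y ω : ℝ)| ∂μ) / 2) ∧
    (∫ ω, min (X ω : ℝ) (Y ω : ℝ) ∂μ
        = (1 + x
            - 2 * Real.exp (-x - 1) * (besselI 0 (2 * Real.sqrt x)
                + Real.sqrt x * besselI 1 (2 * Real.sqrt x))
            - (1 - x) * (1 - 2 * marcumQ1 (Real.sqrt (2 * x)) (Real.sqrt 2))) / 2) := by
  obtain ⟨r, rfl⟩ : ∃ r : NNReal, (r : ℝ) = x := ⟨⟨x, hx.le⟩, rfl⟩
  obtain ⟨mX, lX⟩ := law_aux μ r X hX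
  obtain ⟨mY, lY⟩ := law_aux μ 1 Y (by simpa using hY)
  obtain ⟨iX, eX⟩ := integ_aux μ _ X mX lX
  obtain ⟨iY, eY⟩ := integ_aux μ _ Y mY lY
  have iD : Integrable (fun ω => |(X ω : ℝ) - (Y ω : ℝ)|) μ := (iX.sub iY).abs
  have iM : Integrable (fun ω => min (X ω : ℝ) (Y ω : ℝ)) μ := iX.inf iY
  constructor
  · have : ∀ ω, min (X ω : ℝ) (Y ω : ℝ) = ((X ω : ℝ) + Y ω - |(X ω : ℝ) - Y ω|) / 2 := by
      intro ω
      rcases le_total (X ω : ℝ) (Y ω : ℝ) with h | h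
      · rw [min_eq_left h, abs_of_nonpos (by linarith)]; ring
      · rw [min_eq_right h, abs_of_nonneg (by linarith)]; ring
    simp_rw [this]
    rw [integral_div, integral_sub (f := fun ω => (X ω : ℝ) + (Y ω : ℝ)) (iX.add iY) iD, integral_add iX iY, eX, eY]
    simp [add_comm]
  · have mXY : AEMeasurable (fun ω => (X ω, Y ω)) μ := mX.prodMk mY
    have hl := (indepFun_iff_map_prod_eq_prod_map_map mX mY).1 hindep
    rw [lX, lY] at hl
    have i2 : Integrable (fun p : ℕ × ℕ => min (p.1 : ℝ) (p.2 : ℝ)) (μ.map (fun ω => (X ω, Y ω))) := by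
      rw [integrable_map_measure (by fun_prop) mXY]
      exact iM
    have e1 : ∫ ω, min (X ω : ℝ) (Y ω : ℝ) ∂μ = ∫ p : ℕ × ℕ, min (p.1 : ℝ) (p.2 : ℝ)
        ∂(μ.map (fun ω => (X ω, Y ω))) := by
      rw [integral_map mXY (by fun_prop)]
    rw [e1, integral_countable i2, hl]
    have e2 : ∀ p : ℕ × ℕ, ((poissonMeasure r).prod (poissonMeasure 1)).real {p}
        • min (p.1 : ℝ) (p.2 : ℝ) = Real.exp (-(r:ℝ) - 1) * (ww r p * min (p.1 : ℝ) (p.2 : ℝ)) := by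
      rintro ⟨i, j⟩
      rw [← Set.singleton_prod_singleton, measureReal_prod_prod, poissonMeasure_real_singleton,
        poissonMeasure_real_singleton, sub_eq_add_neg, Real.exp_add]
      simp only [ww, NNReal.coe_one, smul_eq_mul]
      ring
    simp_rw [e2]
    rw [tsum_mul_left, (min_aux r hx).tsum_eq]
    have e3 : Real.exp ((r:ℝ) + 1) = (Real.exp (-(r:ℝ) - 1))⁻¹ := by
      rw [← Real.exp_neg]; congr 1; ring
    rw [e3]
    have := Real.exp_ne_zero (-(r:ℝ) - 1)
    field_simp
    ring
end
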